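/- arXiv:1510.05330 — 3 statements merged into one kernel-verified Lean document; each statement's English description precedes it below -/
import Mathlib

section
/- Let n ≥ 1, R = ℚ[x_1,…,x_n], and let I ⊆ {1,…,n−1} be any subset, with W_I ⊆ S_n the parabolic subgroup generated by the adjacent transpositions (i, i+1) for i ∈ I, and R^{W_I} the subalgebra of W_I-invariant polynomials. Then the bimodule R ⊗_{R^{W_I}} R is projective both as a left R-module (via action on the first tensor factor) and as a right R-module (via action on the second tensor factor). Consequently, tensoring over R with R ⊗_{R^{W_I}} R, on either side, is an exact functor on (R,R)-bimodules. -/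
/-!
The point is that `R` is a direct summand of a finite free `R^{W_I}`-module; base change along
`R^{W_I} → R`, in either tensor factor, then gives projectivity, hence flatness.

Let `Δ` be the product of the positive roots `x_i - x_j` of `W_I`. Antisymmetrizing over `W_I`
yields a polynomial divisible by `Δ` (`rootProd_dvd`, the roots being pairwise coprime), and the
quotient is invariant because `Δ` is itself antisymmetric (`rename_rootProd`). This gives the
Demazure operator `∂ : R → R^{W_I}`, which is `R^{W_I}`-linear (`demazure`).

Consider the kernel `K(x, y) = ∏ (x_i - y_j)` over the same pairs `i < j`. For `w ∈ W_I`,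
`K(x, wx)` is `Δ` when `w = 1` and zero otherwise (`eval_dualKernel`). Writing
`K = ∑_d u_d(x) y^d`, it follows that `∑_d u_d ∂(x^d f) = f` for all `f`
(`sum_coeff_mul_demazure`): the maps `f ↦ (∂(x^d f))_d` and `(a_d) ↦ ∑_d a_d u_d` exhibit `R` as a
retract of a finite free module.
-/

open MvPolynomial

set_option synthInstance.maxHeartbeats 1000000
set_option maxHeartbeats 1600000

noncomputable section

/-- The polynomial ring `R = ℚ[x_1,…,x_n]`. -/
abbrev Rr (n : ℕ) := MvPolynomial (Fin n) ℚ

/-- The subalgebra `R^{S_k}` of polynomials invariant under all permutations of the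
variables `x_1,…,x_k` which fix the remaining variables (0-indexed: permutations `g` of
`Fin n` with `g i = i` whenever `k ≤ i`). -/
def invar (n k : ℕ) : Subalgebra ℚ (Rr n) :=
  ⨅ g ∈ {g : Equiv.Perm (Fin n) | ∀ i : Fin n, k ≤ (i : ℕ) → g i = i},
    AlgHom.equalizer (rename (g : Fin n → Fin n)) (AlgHom.id ℚ (Rr n))

/-- `R^W = R^{S_n}`, the symmetric polynomials. -/
abbrev RWa (n : ℕ) : Subalgebra ℚ (Rr n) := invar n n

/-- `R^I = R^{S_{n−1}}`. -/
abbrev RIa (n : ℕ) : Subalgebra ℚ (Rr n) := invar n (n - 1)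

lemma invar_antitone (n : ℕ) {k l : ℕ} (h : k ≤ l) : invar n l ≤ invar n k := by
  refine le_iInf₂ fun g hg => ?_
  exact iInf₂_le g (fun i hi => hg i (h.trans hi))

/-- `R^{S_n} ⊆ R^{S_{n−1}}`. -/
lemma RW_le_RI (n : ℕ) : RWa n ≤ RIa n := invar_antitone n (Nat.sub_le n 1)

/-- `R^{S_{n−1}}` as an algebra (in particular, a module) over `R^{S_n}`. -/
instance algebraRWRI (n : ℕ) : Algebra (RWa n) (RIa n) :=
  ((Subalgebra.inclusion (RW_le_RI n)).toRingHom).toAlgebra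

/-- The variable `x_n` (the last one), as an element of `R`. -/
def xnn (n : ℕ) : Rr n :=
  if h : 0 < n then X (⟨(n - 1) % n, Nat.mod_lt _ h⟩ : Fin n) else 0

lemma mem_invar_iff (n k : ℕ) (x : Rr n) :
    x ∈ invar n k ↔ ∀ g : Equiv.Perm (Fin n),
      (∀ i : Fin n, k ≤ (i : ℕ) → g i = i) → rename (g : Fin n → Fin n) x = x := by
  simp [invar, Algebra.mem_iInf, AlgHom.mem_equalizer]

lemma xnn_mem_RI (n : ℕ) : xnn n ∈ RIa n := by
  rw [mem_invar_iff]
  intro g hg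
  unfold xnn
  split_ifs with h
  · rw [rename_X, hg]
    have : (n - 1) % n = n - 1 := Nat.mod_eq_of_lt (by omega)
    simp [this]
  · simp

/-- The element `x_n^k` of `R^{S_{n−1}}`. -/
def xnpow (n k : ℕ) : RIa n := ⟨xnn n ^ k, pow_mem (xnn_mem_RI n) k⟩

/-- `e_m(x_1,…,x_{n−1})`, as an element of `R = ℚ[x_1,…,x_n]`. -/
def esymmFirst (n m : ℕ) : Rr n :=
  rename (Fin.castLE (Nat.sub_le n 1)) (esymm (Fin (n - 1)) ℚ m)

lemma esymmFirst_mem_RI (n m : ℕ) : esymmFirst n m ∈ RIa n := by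
  rw [mem_invar_iff]
  intro g hg
  unfold esymmFirst
  have key : ∀ i : Fin n, (i : ℕ) < n - 1 → ((g i : Fin n) : ℕ) < n - 1 := by
    intro i hi
    by_contra hcon
    push_neg at hcon
    have h1 : g (g i) = g i := hg (g i) hcon
    have h2 : g i = i := g.injective h1
    rw [h2] at hcon; omega
  let g' : Fin (n - 1) → Fin (n - 1) := fun i =>
    ⟨((g (Fin.castLE (Nat.sub_le n 1) i) : Fin n) : ℕ), key _ (by simp)⟩
  have hinj : Function.Injective g' := by
    intro a b hab
    apply Fin.castLE_injective (Nat.sub_le n 1)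
    apply g.injective
    apply Fin.ext
    simpa [g', Fin.ext_iff] using hab
  let e : Equiv.Perm (Fin (n - 1)) :=
    Equiv.ofBijective g' (Finite.injective_iff_bijective.mp hinj)
  have hcomp : (g : Fin n → Fin n) ∘ Fin.castLE (Nat.sub_le n 1) =
      Fin.castLE (Nat.sub_le n 1) ∘ (e : Fin (n - 1) → Fin (n - 1)) := by
    funext i
    exact (Fin.ext rfl : Fin.castLE (Nat.sub_le n 1) (e i) = g (Fin.castLE (Nat.sub_le n 1) i)).symm
  calc (rename (g : Fin n → Fin n))
        ((rename (Fin.castLE (Nat.sub_le n 1))) (esymm (Fin (n - 1)) ℚ m))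
      = rename ((g : Fin n → Fin n) ∘ Fin.castLE (Nat.sub_le n 1))
          (esymm (Fin (n - 1)) ℚ m) := rename_rename _ _ _
    _ = rename (Fin.castLE (Nat.sub_le n 1) ∘ (e : Fin (n - 1) → Fin (n - 1)))
          (esymm (Fin (n - 1)) ℚ m) := by rw [hcomp]
    _ = rename (Fin.castLE (Nat.sub_le n 1))
          (rename (e : Fin (n - 1) → Fin (n - 1)) (esymm (Fin (n - 1)) ℚ m)) :=
        (rename_rename _ _ _).symm
    _ = rename (Fin.castLE (Nat.sub_le n 1)) (esymm (Fin (n - 1)) ℚ m) := by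
        rw [rename_esymm]

/-- `e_m(x_1,…,x_{n−1})` as an element of `R^{S_{n−1}}`. -/
def eI (n m : ℕ) : RIa n := ⟨esymmFirst n m, esymmFirst_mem_RI n m⟩

/-- The adjacent transposition `(i, i+1)` (1-indexed: `(i+1, i+2)` for `i : Fin (n-1)`
0-indexed), as a permutation of `Fin n`. -/
def adjSwap (n : ℕ) (i : Fin (n - 1)) : Equiv.Perm (Fin n) :=
  Equiv.swap ⟨(i : ℕ), lt_of_lt_of_le i.isLt (Nat.sub_le n 1)⟩
    ⟨(i : ℕ) + 1, by have := i.isLt; omega⟩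

/-- The parabolic subgroup `W_I ⊆ S_n` generated by the adjacent transpositions `(i, i+1)`
for `i ∈ I`. -/
def WIsub (n : ℕ) (I : Set (Fin (n - 1))) : Subgroup (Equiv.Perm (Fin n)) :=
  Subgroup.closure ((fun i => adjSwap n i) '' I)

/-- The subalgebra `R^G` of `G`-invariant polynomials, for a subgroup `G ⊆ S_n`. -/
def invarG (n : ℕ) (G : Subgroup (Equiv.Perm (Fin n))) : Subalgebra ℚ (Rr n) :=
  ⨅ g ∈ G, AlgHom.equalizer (rename (g : Fin n → Fin n)) (AlgHom.id ℚ (Rr n))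

open TensorProduct in
/-- The right `R`-module structure on `R ⊗_{R^{W_I}} R`, via multiplication on the second
tensor factor. -/
def rightMod (n : ℕ) (I : Set (Fin (n - 1))) :
    Module (Rr n) ((Rr n) ⊗[invarG n (WIsub n I)] (Rr n)) :=
  ((Algebra.TensorProduct.includeRight :
      (Rr n) →ₐ[invarG n (WIsub n I)] (Rr n) ⊗[invarG n (WIsub n I)] (Rr n)).toRingHom).toModule

/-! ### Reflection subgroups of the symmetric group -/

section Combinatorics

variable {n : ℕ}

/-- A permutation moving no index downwards is the identity. -/
lemma perm_eq_one_of_le (w : Equiv.Perm (Fin n)) (h : ∀ j, j ≤ w j) : w = 1 := by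
  ext1 j
  induction j using WellFoundedGT.induction with
  | ind j ih =>
    rcases (h j).eq_or_lt with h' | h'
    · exact h'.symm
    · exact w.injective (ih _ h')

lemma swap_mem_conj {G : Subgroup (Equiv.Perm (Fin n))} {w : Equiv.Perm (Fin n)}
    (hw : w ∈ G) (i j : Fin n) :
    Equiv.swap (w i) (w j) ∈ G ↔ Equiv.swap i j ∈ G := by
  have h : w * Equiv.swap i j * w⁻¹ = Equiv.swap (w i) (w j) := by
    rw [Equiv.mul_swap_eq_swap_mul]; simp
  rw [← h, G.mul_mem_cancel_right (G.inv_mem hw), G.mul_mem_cancel_left hw]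

lemma WIsub_swap_mem (I : Set (Fin (n - 1))) {w : Equiv.Perm (Fin n)}
    (hw : w ∈ WIsub n I) (j : Fin n) : Equiv.swap (w j) j ∈ WIsub n I := by
  have hS : ∀ f ∈ (fun i => adjSwap n i) '' I, f.IsSwap := by
    rintro _ ⟨i, -, rfl⟩
    exact ⟨_, _, by simp [Fin.ext_iff], rfl⟩
  exact (swap_mem_closure_isSwap hS).2 (((mem_closure_isSwap hS).1 hw).2 j)

/-- The blocks of `W_I` are intervals, so its elements preserve the order of any two indices
lying in different blocks. -/
lemma WIsub_lt (I : Set (Fin (n - 1))) {w : Equiv.Perm (Fin n)} (hw : w ∈ WIsub n I) :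
    ∀ i j : Fin n, i < j → Equiv.swap i j ∉ WIsub n I → w i < w j := by
  induction hw using Subgroup.closure_induction with
  | one => intro i j h _; simpa using h
  | mul x y hx hy ihx ihy =>
    intro i j h hn
    exact ihx _ _ (ihy i j h hn) (by rwa [swap_mem_conj (show y ∈ WIsub n I from hy)])
  | inv x hx ih =>
    intro i j h hn
    have hn' : Equiv.swap (x⁻¹ i) (x⁻¹ j) ∉ WIsub n I := by
      rwa [swap_mem_conj (inv_mem (show x ∈ WIsub n I from hx))]
    by_contra! hle
    rcases hle.eq_or_lt with he | hlt
    · exact h.ne' (x⁻¹.injective he)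
    · have := ih _ _ hlt (by rwa [Equiv.swap_comm])
      simp at this
      exact absurd h this.asymm
  | mem x hx =>
    obtain ⟨k, hk, rfl⟩ := hx
    intro i j h hn
    have hmem : adjSwap n k ∈ WIsub n I := Subgroup.subset_closure ⟨k, hk, rfl⟩
    have hne : ¬ ((i : ℕ) = k ∧ (j : ℕ) = k + 1) := by
      rintro ⟨h1, h2⟩
      apply hn
      convert hmem
      unfold adjSwap
      congr 1 <;> exact Fin.ext (by simpa)
    simp only [adjSwap, Equiv.swap_apply_def, Fin.ext_iff, Fin.lt_def] at *
    split_ifs <;> simp <;> omega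

end Combinatorics

/-! ### Antisymmetric polynomials -/

section Antisymmetric

variable {n : ℕ}

lemma mem_invarG {G : Subgroup (Equiv.Perm (Fin n))} {x : Rr n} :
    x ∈ invarG n G ↔ ∀ g ∈ G, rename (g : Fin n → Fin n) x = x := by
  simp [invarG, Algebra.mem_iInf, AlgHom.mem_equalizer]

lemma X_sub_X_irreducible {i j : Fin n} (h : i ≠ j) : Irreducible (X i - X j : Rr n) := by
  have := irreducible_mul_X_add (1 : Rr n) (-X j) i one_ne_zero (by simp)
    (by simpa [vars_neg, vars_X] using h) isRelPrime_one_left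
  simpa [sub_eq_add_neg] using this

lemma X_sub_X_isRelPrime {i j k l : Fin n} (hij : i < j) (hkl : k < l)
    (h : (i, j) ≠ (k, l)) : IsRelPrime (X i - X j : Rr n) (X k - X l) := by
  rw [(X_sub_X_irreducible hij.ne).isRelPrime_iff_not_dvd]
  -- evaluating at the indicator of an index of `{k, l}` outside `{i, j}` refutes divisibility
  have key : ∀ m : Fin n, m ≠ i → m ≠ j → (m = k ∨ m = l) →
      ¬ (X i - X j : Rr n) ∣ X k - X l := by
    rintro m hi hj hm ⟨q, hq⟩
    have := congrArg (eval (fun a => if a = m then (1 : ℚ) else 0)) hq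
    simp only [map_sub, map_mul, eval_X, hi.symm, hj.symm, if_false, sub_self, zero_mul] at this
    rcases hm with rfl | rfl
    · simp [hkl.ne'] at this
    · simp [hkl.ne] at this
  by_cases hk : k = i ∨ k = j
  · refine key l ?_ ?_ (Or.inr rfl)
    · rintro rfl
      rcases hk with rfl | rfl
      · exact hkl.ne rfl
      · exact hij.asymm hkl
    · rintro rfl
      rcases hk with rfl | rfl
      · exact h rfl
      · exact hkl.ne rfl
  · push Not at hk
    exact key k hk.1 hk.2 (Or.inl rfl)

lemma X_sub_X_dvd_sub_rename_swap (i j : Fin n) (f : Rr n) :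
    (X i - X j : Rr n) ∣ f - rename (Equiv.swap i j) f := by
  rw [← Ideal.mem_span_singleton, ← Ideal.Quotient.mk_eq_mk_iff_sub_mem]
  have hX : Ideal.Quotient.mkₐ ℚ (Ideal.span {(X i - X j : Rr n)}) (X i) =
      Ideal.Quotient.mkₐ ℚ (Ideal.span {(X i - X j : Rr n)}) (X j) := by
    simp only [Ideal.Quotient.mkₐ_eq_mk]
    rw [Ideal.Quotient.mk_eq_mk_iff_sub_mem]
    exact Ideal.mem_span_singleton_self _
  have : Ideal.Quotient.mkₐ ℚ (Ideal.span {(X i - X j : Rr n)}) =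
      (Ideal.Quotient.mkₐ ℚ (Ideal.span {(X i - X j : Rr n)})).comp
        (rename (Equiv.swap i j)) := by
    apply MvPolynomial.algHom_ext
    intro k
    rw [AlgHom.comp_apply, rename_X]
    by_cases h1 : k = i
    · rw [h1, Equiv.swap_apply_left, hX]
    · by_cases h2 : k = j
      · rw [h2, Equiv.swap_apply_right, hX]
      · rw [Equiv.swap_apply_of_ne_of_ne h1 h2]
  exact DFunLike.congr_fun this f

open Classical in
/-- The pairs `i < j` whose transposition lies in `G`, i.e. the positive roots of `G`. -/
def rootPairs (G : Subgroup (Equiv.Perm (Fin n))) : Finset (Fin n × Fin n) :=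
  Finset.univ.filter fun p => p.1 < p.2 ∧ Equiv.swap p.1 p.2 ∈ G

lemma mem_rootPairs {G : Subgroup (Equiv.Perm (Fin n))} {p : Fin n × Fin n} :
    p ∈ rootPairs G ↔ p.1 < p.2 ∧ Equiv.swap p.1 p.2 ∈ G := by
  simp [rootPairs]

/-- The product `Δ` of the positive roots `x_i - x_j` of `G`. -/
def rootProd (G : Subgroup (Equiv.Perm (Fin n))) : Rr n :=
  ∏ p ∈ rootPairs G, (X p.1 - X p.2)

lemma rootProd_ne_zero (G : Subgroup (Equiv.Perm (Fin n))) : rootProd G ≠ 0 :=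
  Finset.prod_ne_zero_iff.2 fun _ hp =>
    (X_sub_X_irreducible (mem_rootPairs.1 hp).1.ne).ne_zero

lemma rootProd_dvd {G : Subgroup (Equiv.Perm (Fin n))} {f : Rr n}
    (hf : ∀ i j, i ≠ j → Equiv.swap i j ∈ G → rename (Equiv.swap i j) f = -f) :
    rootProd G ∣ f := by
  refine Finset.prod_dvd_of_isRelPrime ?_ ?_
  · intro p hp q hq hpq
    exact X_sub_X_isRelPrime (mem_rootPairs.1 hp).1 (mem_rootPairs.1 hq).1 hpq
  · intro p hp
    obtain ⟨h1, h2⟩ := mem_rootPairs.1 hp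
    have := X_sub_X_dvd_sub_rename_swap p.1 p.2 f
    rw [hf _ _ h1.ne h2, sub_neg_eq_add, ← two_mul] at this
    have h2u : IsUnit (2 : Rr n) := by
      have : (2 : Rr n) = C 2 := (map_ofNat C 2).symm
      rw [this]
      exact (IsUnit.mk0 (2 : ℚ) two_ne_zero).map C
    exact h2u.dvd_mul_left.1 this

open Classical in
/-- `Δ` is antisymmetric: an element of `G` preserving the order of all pairs not swapped by `G` has
all its inversions among the root pairs, so it scales `Δ` by its sign. -/
lemma rename_rootProd {G : Subgroup (Equiv.Perm (Fin n))} {w : Equiv.Perm (Fin n)} (hw : w ∈ G)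
    (hlt : ∀ i j : Fin n, i < j → Equiv.swap i j ∉ G → w i < w j) :
    rename w (rootProd G) = ((w.sign : ℤ) : Rr n) * rootProd G := by
  -- antisymmetric extension of the roots by `±1` on the pairs not swapped by `G`
  let f : Fin n → Fin n → Rr n := fun i j =>
    if i = j then 0 else if Equiv.swap i j ∈ G then X i - X j else if i < j then 1 else -1
  have hf : ∀ i j, f i j = -f j i := by
    intro i j
    simp only [f, Equiv.swap_comm j i, eq_comm (a := j)]
    split_ifs with h1 h2 h3 h4 h4 <;> first | (exfalso; omega) | simp
  have hprod : ∀ g : Fin n → Fin n → Rr n, (∀ i j, i < j → Equiv.swap i j ∉ G → g i j = 1) →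
      ∏ i, ∏ j ∈ Finset.Ioi i, g i j = ∏ p ∈ rootPairs G, g p.1 p.2 := by
    intro g hg
    have : ∀ i : Fin n, Finset.Ioi i = Finset.univ.filter (fun j => i < j) := by
      intro i; ext; simp
    simp_rw [this, Finset.prod_filter]
    rw [← Finset.prod_product', Finset.univ_product_univ, rootPairs, Finset.prod_filter]
    refine Finset.prod_congr rfl fun p _ => ?_
    by_cases h1 : p.1 < p.2 <;> by_cases h2 : Equiv.swap p.1 p.2 ∈ G <;> simp [h1, h2, hg]
  have hΔ : ∏ p ∈ rootPairs G, f p.1 p.2 = rootProd G := by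
    refine Finset.prod_congr rfl fun p hp => ?_
    obtain ⟨h1, h2⟩ := mem_rootPairs.1 hp
    simp [f, h1.ne, h2]
  have hwΔ : ∏ p ∈ rootPairs G, f (w p.1) (w p.2) = rename w (rootProd G) := by
    rw [rootProd, map_prod]
    refine Finset.prod_congr rfl fun p hp => ?_
    obtain ⟨h1, h2⟩ := mem_rootPairs.1 hp
    simp [f, h1.ne, h2, swap_mem_conj hw]
  rw [← hwΔ, ← hΔ, ← hprod (fun i j => f (w i) (w j)), ← hprod f]
  · exact w.prod_Ioi_comp_eq_sign_mul_prod hf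
  · intro i j h1 h2
    simp [f, h1.ne, h2, h1]
  · intro i j h1 h2
    simp [f, h1.ne, h2, swap_mem_conj hw, hlt i j h1 h2]

/-- The antisymmetrization `∑_{w ∈ G} sgn(w) w(f)`. -/
def antisym (G : Subgroup (Equiv.Perm (Fin n))) (f : Rr n) : Rr n :=
  open Classical in ∑ w : G, ((w.1.sign : ℤ) : Rr n) * rename w.1 f

lemma rename_antisym {G : Subgroup (Equiv.Perm (Fin n))} {w : Equiv.Perm (Fin n)} (hw : w ∈ G)
    (f : Rr n) : rename w (antisym G f) = ((w.sign : ℤ) : Rr n) * antisym G f := by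
  classical
  rw [antisym, map_sum, Finset.mul_sum]
  refine Fintype.sum_equiv (Equiv.mulLeft ⟨w, hw⟩) _ _ fun v => ?_
  rw [map_mul, map_intCast, rename_rename]
  simp only [Equiv.coe_mulLeft, Subgroup.coe_mul, Equiv.Perm.sign_mul,
    Equiv.Perm.coe_mul, ← mul_assoc, ← Int.cast_mul, ← Units.val_mul, Int.units_mul_self, one_mul]

end Antisymmetric

/-! ### The Demazure operator and its dual bases -/

section Demazure

variable {n : ℕ} (I : Set (Fin (n - 1)))

lemma exists_demazure (f : Rr n) :
    ∃ q : invarG n (WIsub n I), rootProd (WIsub n I) * (q : Rr n) = antisym (WIsub n I) f := by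
  obtain ⟨q, hq⟩ : rootProd (WIsub n I) ∣ antisym (WIsub n I) f := by
    refine rootProd_dvd fun i j hij h => ?_
    rw [rename_antisym h, Equiv.Perm.sign_swap hij]
    simp
  refine ⟨⟨q, mem_invarG.2 fun w hw => ?_⟩, hq.symm⟩
  have h := rename_antisym hw f
  rw [hq, map_mul, rename_rootProd hw (WIsub_lt I hw), mul_assoc] at h
  have hs : ((w.sign : ℤ) : Rr n) ≠ 0 := by simp
  exact mul_left_cancel₀ (rootProd_ne_zero _) (mul_left_cancel₀ hs h)

/-- The Demazure operator `f ↦ Δ⁻¹ ∑_{w ∈ W_I} sgn(w) w(f)`, an `R^{W_I}`-linear map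
`R → R^{W_I}`. -/
def demazure : Rr n →ₗ[invarG n (WIsub n I)] invarG n (WIsub n I) where
  toFun f := (exists_demazure I f).choose
  map_add' f g := by
    apply Subtype.ext
    apply mul_left_cancel₀ (rootProd_ne_zero (WIsub n I))
    rw [Subalgebra.coe_add, mul_add, (exists_demazure I f).choose_spec,
      (exists_demazure I g).choose_spec, (exists_demazure I (f + g)).choose_spec]
    simp [antisym, mul_add, Finset.sum_add_distrib]
  map_smul' b f := by
    apply Subtype.ext
    apply mul_left_cancel₀ (rootProd_ne_zero (WIsub n I))
    rw [(exists_demazure I (b • f)).choose_spec, RingHom.id_apply, smul_eq_mul,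
      Subalgebra.coe_mul, mul_left_comm, (exists_demazure I f).choose_spec, antisym, antisym,
      Finset.mul_sum]
    refine Finset.sum_congr rfl fun w _ => ?_
    rw [Subalgebra.smul_def, smul_eq_mul, map_mul, mem_invarG.1 b.2 _ w.2, mul_left_comm]

lemma rootProd_mul_demazure (f : Rr n) :
    rootProd (WIsub n I) * (demazure I f : Rr n) = antisym (WIsub n I) f :=
  (exists_demazure I f).choose_spec

/-- The kernel `∏ (x_i - y_j)` over the positive roots, as a polynomial in the `y` variables with
coefficients in `R = ℚ[x]`. -/
def dualKernel : MvPolynomial (Fin n) (Rr n) :=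
  ∏ p ∈ rootPairs (WIsub n I), (C (X p.1) - X p.2)

/-- Setting `y = w x` in the kernel gives `Δ` for `w = 1`. For any other `w ∈ W_I` some `j` has
`w j < j`, and the factor of the pair `(w j, j)` vanishes. -/
lemma eval_dualKernel {w : Equiv.Perm (Fin n)} (hw : w ∈ WIsub n I) [Decidable (w = 1)] :
    eval (fun j => X (w j)) (dualKernel I) = if w = 1 then rootProd (WIsub n I) else 0 := by
  rw [dualKernel, map_prod]
  split_ifs with h
  · subst h; simp [rootProd]
  · obtain ⟨j, hj⟩ : ∃ j, w j < j := by
      by_contra! hcon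
      exact h (perm_eq_one_of_le w hcon)
    exact Finset.prod_eq_zero (i := (w j, j))
      (mem_rootPairs.2 ⟨hj, WIsub_swap_mem I hw j⟩) (by simp)

/-- The coefficients of the kernel and the monomials in `y` are dual bases for the pairing
`(u, v) ↦ ∂(u v)`. -/
lemma sum_coeff_mul_demazure (f : Rr n) :
    ∑ d ∈ (dualKernel I).support,
      (dualKernel I).coeff d * (demazure I (monomial d 1 * f) : Rr n) = f := by
  classical
  apply mul_left_cancel₀ (rootProd_ne_zero (WIsub n I))
  rw [Finset.mul_sum]
  simp_rw [mul_left_comm (rootProd (WIsub n I)), rootProd_mul_demazure, antisym, Finset.mul_sum]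
  rw [Finset.sum_comm]
  have key : ∀ w : WIsub n I, ∑ d ∈ (dualKernel I).support, (dualKernel I).coeff d *
      (((w.1.sign : ℤ) : Rr n) * rename w.1 (monomial d 1 * f)) =
      if w = 1 then rootProd (WIsub n I) * f else 0 := by
    intro w
    have hmon : ∀ d : Fin n →₀ ℕ, rename w.1 (monomial d (1 : ℚ)) =
        ∏ i, (X (w.1 i) : Rr n) ^ d i := by
      intro d
      rw [monomial_eq, Finsupp.prod_fintype _ _ (by simp)]
      simp [map_prod]
    calc _ = ((w.1.sign : ℤ) : Rr n) * eval (fun j => X (w.1 j)) (dualKernel I) *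
          rename w.1 f := by
          rw [eval_eq', Finset.mul_sum, Finset.sum_mul]
          refine Finset.sum_congr rfl fun d _ => ?_
          rw [map_mul, hmon]; ring
      _ = _ := by
          rw [eval_dualKernel I w.2]
          by_cases h : w = 1
          · simp [h]
          · have : (w : Equiv.Perm (Fin n)) ≠ 1 := by simpa using h
            simp [h, this]
  rw [Finset.sum_congr rfl fun w _ => key w]
  simp

lemma projective_over_invarG : Module.Projective (invarG n (WIsub n I)) (Rr n) := by
  classical
  refine Module.Projective.of_split
    (M := (dualKernel I).support → invarG n (WIsub n I))
    (LinearMap.pi fun d => (demazure I).comp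
      (LinearMap.mulLeft (invarG n (WIsub n I)) (monomial (d : Fin n →₀ ℕ) (1 : ℚ))))
    (Fintype.linearCombination (invarG n (WIsub n I))
      fun d => (dualKernel I).coeff (d : Fin n →₀ ℕ)) ?_
  ext1 f
  conv_rhs => rw [LinearMap.id_apply, ← sum_coeff_mul_demazure I f, ← Finset.sum_coe_sort]
  rw [LinearMap.comp_apply, Fintype.linearCombination_apply]
  refine Finset.sum_congr rfl fun d _ => ?_
  rw [Subalgebra.smul_def, smul_eq_mul, mul_comm]
  rfl

end Demazure

open TensorProduct in
/-- Exchanging the two factors carries the left `R`-module structure of `R ⊗[B] R` to the right one,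
so projectivity on the right follows from base change on the left. -/
lemma projective_right {B R : Type*} [CommRing B] [CommRing R] [Algebra B R]
    [Module.Projective B R] :
    @Module.Projective R _ (R ⊗[B] R) _
      ((Algebra.TensorProduct.includeRight : R →ₐ[B] R ⊗[B] R).toRingHom).toModule := by
  let inst : Module R (R ⊗[B] R) :=
    ((Algebra.TensorProduct.includeRight : R →ₐ[B] R ⊗[B] R).toRingHom).toModule
  have h : @Module.Projective R _ (R ⊗[B] R) _ TensorProduct.leftModule := inferInstance
  refine @Module.Projective.of_equiv' R _ (R ⊗[B] R) _ inst (R ⊗[B] R) _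
    TensorProduct.leftModule h ?_
  refine @LinearEquiv.mk _ _ _ _ _ _ _ _ _ _ _ _ TensorProduct.leftModule inst
    (@LinearMap.mk _ _ _ _ _ _ _ _ _ TensorProduct.leftModule inst
      (TensorProduct.comm B R R).toAddMonoidHom ?_)
    (TensorProduct.comm B R R).symm
    (TensorProduct.comm B R R).left_inv (TensorProduct.comm B R R).right_inv
  intro r x
  change TensorProduct.comm B R R (r • x) = (1 ⊗ₜ[B] r) * TensorProduct.comm B R R x
  induction x with
  | zero => simp
  | add x y hx hy => rw [smul_add, map_add, map_add, hx, hy, mul_add]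
  | tmul a b => simp [TensorProduct.smul_tmul']

open TensorProduct in
/-- the bimodule `R ⊗_{R^{W_I}} R` is projective as a left `R`-module
(action on the first tensor factor) and as a right `R`-module (action on the second
tensor factor); consequently tensoring with it over `R`, on either side, is an exact
functor (expressed as flatness). -/
theorem tensor_projective_left_and_right (n : ℕ) (hn : 1 ≤ n) (I : Set (Fin (n - 1))) :
    Module.Projective (Rr n) ((Rr n) ⊗[invarG n (WIsub n I)] (Rr n)) ∧
    @Module.Projective (Rr n) _ ((Rr n) ⊗[invarG n (WIsub n I)] (Rr n)) _
      (rightMod n I) ∧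
    -- Consequently, tensoring with `R ⊗_{R^{W_I}} R` over `R`, on either side, is an
    -- exact functor (flatness, in Mathlib's formulation):
    Module.Flat (Rr n) ((Rr n) ⊗[invarG n (WIsub n I)] (Rr n)) ∧
    @Module.Flat (Rr n) ((Rr n) ⊗[invarG n (WIsub n I)] (Rr n)) _ _
      (rightMod n I) := by
  have := projective_over_invarG I
  have hl : Module.Projective (Rr n) ((Rr n) ⊗[invarG n (WIsub n I)] (Rr n)) := inferInstance
  have hr : @Module.Projective (Rr n) _ ((Rr n) ⊗[invarG n (WIsub n I)] (Rr n)) _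
      (rightMod n I) := projective_right
  exact ⟨hl, hr, inferInstance, @Module.Flat.of_projective _ _ _ _ (rightMod n I) hr⟩

end
end

section
/- Let n ≥ 1, R = ℚ[x_1,…,x_n] and R^W = R^{S_n} the symmetric polynomials. Set S = R ⊗_{R^W} R, regarded as an (R,R)-bimodule, i.e. a module over R ⊗_ℚ R. Then the natural map S → End_{R⊗_ℚR}(S) sending s ∈ S to multiplication by s is a bijection (an isomorphism of rings). Equivalently, the bimodule B_{w_0} = R ⊗_{R^W} R is free of rank 1 as a module over its endomorphism ring, which is R ⊗_{R^W} R itself. -/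
/-!
`S = R ⊗_{R^W} R` is a commutative ring, and it is a quotient ring of `R ⊗_ℚ R` through `psiRR`.
An `(R ⊗_ℚ R)`-linear map of `S` is therefore `S`-linear, and an `S`-linear endomorphism `f` of
`S` is multiplication by `f 1`.
-/

open MvPolynomial

set_option synthInstance.maxHeartbeats 1000000
set_option maxHeartbeats 1600000

noncomputable section

open TensorProduct in
/-- The canonical ring homomorphism `R ⊗_ℚ R → R ⊗_{R^W} R`, `a ⊗ b ↦ a ⊗ b`.  It makes
`S = R ⊗_{R^W} R` into a module over `R ⊗_ℚ R`, i.e. an `(R,R)`-bimodule. -/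
def psiRR (n : ℕ) : ((Rr n) ⊗[ℚ] (Rr n)) →ₐ[ℚ] ((Rr n) ⊗[RWa n] (Rr n)) :=
  Algebra.TensorProduct.lift
    (Algebra.TensorProduct.includeLeft :
      (Rr n) →ₐ[ℚ] (Rr n) ⊗[RWa n] (Rr n))
    ((Algebra.TensorProduct.includeRight :
      (Rr n) →ₐ[RWa n] (Rr n) ⊗[RWa n] (Rr n)).restrictScalars ℚ)
    (fun _ _ => Commute.all _ _)

open TensorProduct in
/-- The `(R ⊗_ℚ R)`-module structure on `S = R ⊗_{R^W} R`. -/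
instance moduleRRS (n : ℕ) : Module ((Rr n) ⊗[ℚ] (Rr n)) ((Rr n) ⊗[RWa n] (Rr n)) :=
  ((psiRR n).toRingHom).toModule

open TensorProduct in
/-- Multiplication by `s ∈ S` as an `(R ⊗_ℚ R)`-linear endomorphism of `S`. -/
def mulEnd (n : ℕ) (s : (Rr n) ⊗[RWa n] (Rr n)) :
    Module.End ((Rr n) ⊗[ℚ] (Rr n)) ((Rr n) ⊗[RWa n] (Rr n)) where
  toFun t := s * t
  map_add' _ _ := mul_add _ _ _
  map_smul' a t := by
    show s * (psiRR n a * t) = psiRR n a * (s * t)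
    ring

open TensorProduct in
lemma psiRR_surjective (n : ℕ) : Function.Surjective (psiRR n) := by
  intro t
  induction t using TensorProduct.induction_on with
  | zero => exact ⟨0, map_zero _⟩
  | tmul a b => exact ⟨a ⊗ₜ b, by simp [psiRR]⟩
  | add x y hx hy =>
    obtain ⟨a, rfl⟩ := hx
    obtain ⟨b, rfl⟩ := hy
    exact ⟨a + b, map_add _ _ _⟩

open TensorProduct in
/-- Lemma `lemma-endB0`: the natural map
`S → End_{R ⊗_ℚ R}(S)`, `s ↦ (t ↦ s·t)`, is a bijection; i.e. `B_{w_0} = R ⊗_{R^W} R` is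
free of rank `1` over its endomorphism ring, which is `R ⊗_{R^W} R` itself. -/
theorem mulEnd_bijective (n : ℕ) (hn : 1 ≤ n) :
    Function.Bijective (mulEnd n) := by
  refine ⟨fun s t h => ?_, fun f => ⟨f 1, LinearMap.ext fun t => ?_⟩⟩
  · have h1 : s * 1 = t * 1 := LinearMap.congr_fun h 1
    simpa using h1
  · obtain ⟨a, rfl⟩ := psiRR_surjective n t
    have h1 : f (psiRR n a * 1) = psiRR n a * f 1 := f.map_smul a 1
    rw [mul_one] at h1
    exact (mul_comm _ _).trans h1.symm

end
end

section
/- Let n ≥ 1, R = ℚ[x_1,…,x_n], and 1 ≤ k ≤ n. Then there are isomorphisms of (R,R)-bimodules (equivalently, of ℚ[x_1,…,x_n,y_1,…,y_n]-modules): (R ⊗_{R^{S_k}} R) ⊗_R (R ⊗_{R^{S_n}} R) ≅ (R ⊗_{R^{S_n}} R)^{⊕ k!} and (R ⊗_{R^{S_n}} R) ⊗_R (R ⊗_{R^{S_k}} R) ≅ (R ⊗_{R^{S_n}} R)^{⊕ k!}. (This is the ungraded form of the absorption B_w B_{w_0} ≅ [k]!·B_{w_0} ≅ B_{w_0} B_w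 for w the longest element of S_k ⊆ S_n.) -/
/-!
Write `A = R^{S_k}` and `B = R^{S_n}`, so `B ⊆ A`. The theorem follows from the fact that `R` is
free of rank `k!` over `A` (`exists_basis_invar`): if `b_i` is a basis, then
`R ⊗_A R ⊗_B R = ⨁ R ⊗_A (A b_i) ⊗_B R ≅ ⨁ R ⊗_B R`, and each summand is a sub-bimodule.

Freeness. Adjoin `x_k, x_{k-1}, …, x_1` to `A` one after the other, reaching `R`. If `A'` is the
ring obtained once `x_k, …, x_{j+1}` have been adjoined, then `A'` consists of `S_j`-invariants and
`∏_{i ≤ j} (T - x_i)` has coefficients in `A'`, since it arises from `∏_{i ≤ k} (T - x_i)` by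
dividing by monic linear factors over the rings constructed so far. Hence the powers
`1, x_j, …, x_j^{j-1}` span `A'[x_j]` over `A'`. They are independent: a relation is a polynomial of
degree less than `j` over `A'` with root `x_j`, hence by `S_j`-invariance with the `j` roots
`x_1, …, x_j` (`eq_zero_of_eval_eq_zero`). So `A'[x_j]` is free of rank `j` over `A'`, and the
ranks multiply to `k!` (`exists_basis_of_lifts`). In the formal proof the variables are numbered
from `0`.

Decomposition. The inclusions of the summands are `r ⊗ s ↦ (r ⊗ b_i) ⊗ (1 ⊗ s)` (`mnIncl`) and
`r ⊗ s ↦ (r ⊗ 1) ⊗ (b_i ⊗ s)` (`nmIncl`); the projections (`mnProj`, `nmProj`) come from the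
coordinate functions `R → A` of the basis, extended `R`-linearly to `R ⊗_A R → R`.
-/

/-!
Statement 15.  `R = ℚ[x_1,…,x_n]`; for `1 ≤ k ≤ n`, `R^{S_k}` is the subalgebra of
polynomials invariant under permutations of `x_1,…,x_k` fixing the other variables.
For subalgebras `A ⊆ R`, the bimodule `R ⊗_A R` has left `R`-action on the first factor
and right `R`-action on the second; for bimodules `M`, `N`, the product `M ⊗_R N` is
formed using the right action on `M` and the left action on `N`, and is a module over
`P = ℚ[x_1,…,x_n,y_1,…,y_n]` with `x_i` acting on the left and `y_i` on the right.

Claim: `(R ⊗_{R^{S_k}} R) ⊗_R (R ⊗_{R^{S_n}} R) ≅ (R ⊗_{R^{S_n}} R)^{⊕ k!}` and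
`(R ⊗_{R^{S_n}} R) ⊗_R (R ⊗_{R^{S_k}} R) ≅ (R ⊗_{R^{S_n}} R)^{⊕ k!}` as `P`-modules.
-/

open MvPolynomial TensorProduct

set_option synthInstance.maxHeartbeats 1000000
set_option maxHeartbeats 1600000

noncomputable section

/-- `P = ℚ[x_1,…,x_n,y_1,…,y_n]`. -/
abbrev PP (n : ℕ) := MvPolynomial (Fin n ⊕ Fin n) ℚ

/-- Type synonym for `R ⊗_{R^{S_k}} R` regarded as an `R`-algebra (hence `R`-module) via
the RIGHT `R`-action, i.e. multiplication on the second tensor factor. -/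
def MkT (n k : ℕ) := (Rr n) ⊗[invar n k] (Rr n)

instance (n k : ℕ) : CommRing (MkT n k) :=
  inferInstanceAs (CommRing ((Rr n) ⊗[invar n k] (Rr n)))

instance (n k : ℕ) : Algebra ℚ (MkT n k) :=
  inferInstanceAs (Algebra ℚ ((Rr n) ⊗[invar n k] (Rr n)))

/-- The right `R`-action on `R ⊗_{R^{S_k}} R` (second factor). -/
instance (n k : ℕ) : Algebra (Rr n) (MkT n k) :=
  ((Algebra.TensorProduct.includeRight :
    (Rr n) →ₐ[invar n k] (Rr n) ⊗[invar n k] (Rr n)).toRingHom :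
      (Rr n) →+* MkT n k).toAlgebra

/-- View an element of `R ⊗_{R^{S_k}} R` in the synonym `MkT n k`. -/
def toMkT (n k : ℕ) (t : (Rr n) ⊗[invar n k] (Rr n)) : MkT n k := t

/-- `(R ⊗_{R^{S_k}} R) ⊗_R (R ⊗_{R^{S_n}} R)`, formed with the right `R`-action on the
first bimodule and the left `R`-action on the second. -/
def MN (n k : ℕ) := (MkT n k) ⊗[Rr n] ((Rr n) ⊗[invar n n] (Rr n))

instance (n k : ℕ) : CommRing (MN n k) :=
  @Algebra.TensorProduct.instCommRing (Rr n) (MkT n k) ((Rr n) ⊗[invar n n] (Rr n)) _ _ _ _ _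

instance (n k : ℕ) : Algebra ℚ (MN n k) :=
  @Algebra.TensorProduct.leftAlgebra (Rr n) ℚ (MkT n k) ((Rr n) ⊗[invar n n] (Rr n))
    _ _ _ _ _ _ _ _

/-- The `ℚ`-algebra map `P → (R ⊗_{R^{S_k}} R) ⊗_R (R ⊗_{R^{S_n}} R)` realizing the
`(R,R)`-bimodule structure: `x_i` acts by left multiplication on the leftmost factor and
`y_i` by right multiplication on the rightmost factor. -/
def PsiMN (n k : ℕ) : PP n →ₐ[ℚ] MN n k :=
  aeval (Sum.elim
    (fun i => (toMkT n k ((X i : Rr n) ⊗ₜ[invar n k] (1 : Rr n))) ⊗ₜ[Rr n]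
      ((1 : Rr n) ⊗ₜ[invar n n] (1 : Rr n)))
    (fun i => (toMkT n k ((1 : Rr n) ⊗ₜ[invar n k] (1 : Rr n))) ⊗ₜ[Rr n]
      ((1 : Rr n) ⊗ₜ[invar n n] (X i : Rr n))))

/-- The `P`-module (= `(R,R)`-bimodule) structure on
`(R ⊗_{R^{S_k}} R) ⊗_R (R ⊗_{R^{S_n}} R)`. -/
instance (n k : ℕ) : Module (PP n) (MN n k) := ((PsiMN n k).toRingHom).toModule

/-- Type synonym for `R ⊗_{R^{S_n}} R` with the RIGHT `R`-action (second factor). -/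
def SnR (n : ℕ) := (Rr n) ⊗[invar n n] (Rr n)

instance (n : ℕ) : CommRing (SnR n) :=
  inferInstanceAs (CommRing ((Rr n) ⊗[invar n n] (Rr n)))

instance (n : ℕ) : Algebra ℚ (SnR n) :=
  inferInstanceAs (Algebra ℚ ((Rr n) ⊗[invar n n] (Rr n)))

instance (n : ℕ) : Algebra (Rr n) (SnR n) :=
  ((Algebra.TensorProduct.includeRight :
    (Rr n) →ₐ[invar n n] (Rr n) ⊗[invar n n] (Rr n)).toRingHom :
      (Rr n) →+* SnR n).toAlgebra

/-- View an element of `R ⊗_{R^{S_n}} R` in the synonym `SnR n`. -/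
def toSnR (n : ℕ) (t : (Rr n) ⊗[invar n n] (Rr n)) : SnR n := t

/-- `(R ⊗_{R^{S_n}} R) ⊗_R (R ⊗_{R^{S_k}} R)`, formed with the right `R`-action on the
first bimodule and the left `R`-action on the second. -/
def NM (n k : ℕ) := (SnR n) ⊗[Rr n] ((Rr n) ⊗[invar n k] (Rr n))

instance (n k : ℕ) : CommRing (NM n k) :=
  @Algebra.TensorProduct.instCommRing (Rr n) (SnR n) ((Rr n) ⊗[invar n k] (Rr n)) _ _ _ _ _

instance (n k : ℕ) : Algebra ℚ (NM n k) :=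
  @Algebra.TensorProduct.leftAlgebra (Rr n) ℚ (SnR n) ((Rr n) ⊗[invar n k] (Rr n))
    _ _ _ _ _ _ _ _

/-- The bimodule structure on `(R ⊗_{R^{S_n}} R) ⊗_R (R ⊗_{R^{S_k}} R)`. -/
def PsiNM (n k : ℕ) : PP n →ₐ[ℚ] NM n k :=
  aeval (Sum.elim
    (fun i => (toSnR n ((X i : Rr n) ⊗ₜ[invar n n] (1 : Rr n))) ⊗ₜ[Rr n]
      ((1 : Rr n) ⊗ₜ[invar n k] (1 : Rr n)))
    (fun i => (toSnR n ((1 : Rr n) ⊗ₜ[invar n n] (1 : Rr n))) ⊗ₜ[Rr n]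
      ((1 : Rr n) ⊗ₜ[invar n k] (X i : Rr n))))

instance (n k : ℕ) : Module (PP n) (NM n k) := ((PsiNM n k).toRingHom).toModule

/-- The `ℚ`-algebra map `P → R ⊗_{R^{S_n}} R` with `x_i ↦ x_i ⊗ 1`, `y_i ↦ 1 ⊗ x_i`,
realizing the `(R,R)`-bimodule structure of `B_{w_0}`. -/
def PhiN (n : ℕ) : PP n →ₐ[ℚ] ((Rr n) ⊗[invar n n] (Rr n)) :=
  aeval (Sum.elim (fun i => (X i : Rr n) ⊗ₜ[invar n n] (1 : Rr n))
    (fun i => (1 : Rr n) ⊗ₜ[invar n n] (X i : Rr n)))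

/-- The `P`-module (= `(R,R)`-bimodule) structure on `R ⊗_{R^{S_n}} R`. -/
instance (n : ℕ) : Module (PP n) ((Rr n) ⊗[invar n n] (Rr n)) :=
  ((PhiN n).toRingHom).toModule

/-! ### Freeness of `R` over `R^{S_k}` -/

theorem mem_invar {n k : ℕ} {f : Rr n} : f ∈ invar n k ↔
    ∀ g : Equiv.Perm (Fin n), (∀ i : Fin n, k ≤ (i : ℕ) → g i = i) → rename g f = f := by
  simp [invar, Algebra.mem_iInf, AlgHom.mem_equalizer]

theorem invar_anti {n k l : ℕ} (h : k ≤ l) : invar n l ≤ invar n k := fun f hf => by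
  rw [mem_invar] at hf ⊢
  exact fun g hg => hf g fun i hi => hg i (h.trans hi)

/-- `∏_{i < j} (T - x_i)`, a polynomial in `T` over `R`. -/
def rootPoly (n j : ℕ) : Polynomial (Rr n) :=
  ∏ i ∈ Finset.univ.filter (fun i : Fin n => (i : ℕ) < j), (Polynomial.X - Polynomial.C (X i))

theorem rootPoly_succ {n j : ℕ} (h : j < n) : rootPoly n (j + 1) =
    (Polynomial.X - Polynomial.C (X ⟨j, h⟩)) * rootPoly n j := by
  have : Finset.univ.filter (fun i : Fin n => (i : ℕ) < j + 1) =
      insert ⟨j, h⟩ (Finset.univ.filter (fun i : Fin n => (i : ℕ) < j)) := by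
    ext i
    simp only [Finset.mem_filter, Finset.mem_univ, true_and, Finset.mem_insert, Fin.ext_iff]
    omega
  rw [rootPoly, this, Finset.prod_insert (by simp), rootPoly]

theorem rootPoly_monic (n j : ℕ) : (rootPoly n j).Monic :=
  Polynomial.monic_prod_of_monic _ _ fun _ _ => Polynomial.monic_X_sub_C _

theorem rootPoly_natDegree {n j : ℕ} (h : j ≤ n) : (rootPoly n j).natDegree = j := by
  induction j with
  | zero => simp [rootPoly]
  | succ j ih =>
    rw [rootPoly_succ (by omega),
      (Polynomial.monic_X_sub_C _).natDegree_mul (rootPoly_monic n j), ih (by omega),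
      Polynomial.natDegree_X_sub_C, add_comm]

theorem rootPoly_coeff_mem (n k d : ℕ) : (rootPoly n k).coeff d ∈ invar n k := by
  rw [mem_invar]
  intro g hg
  have key : (rootPoly n k).map (rename g : Rr n →ₐ[ℚ] Rr n).toRingHom = rootPoly n k := by
    simp only [rootPoly, Polynomial.map_prod]
    refine Finset.prod_equiv g (fun i => ?_) (fun i _ => ?_)
    · simp only [Finset.mem_filter, Finset.mem_univ, true_and]
      constructor
      · intro hi
        by_contra! h
        have := g.injective (hg _ h)
        omega
      · intro hi
        by_contra! h
        rw [hg _ h] at hi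
        omega
    · simp
  conv_rhs => rw [← key]
  simp

/-- A polynomial of degree at most `j` with `S_{j+1}`-invariant coefficients that vanishes at `x_j`
vanishes at all of its conjugates `x_0, …, x_j`, hence is zero. -/
theorem eq_zero_of_eval_eq_zero {n j : ℕ} (h : j < n) (q : Polynomial (Rr n))
    (hq : ∀ d, q.coeff d ∈ invar n (j + 1)) (hdeg : q.natDegree < j + 1)
    (h0 : q.eval (X ⟨j, h⟩) = 0) : q = 0 := by
  refine Polynomial.eq_zero_of_natDegree_lt_card_of_eval_eq_zero q
    (f := fun i : Fin (j + 1) => (X (Fin.castLE h i) : Rr n)) ?_ (fun i => ?_) (by simpa using hdeg)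
  · intro a b hab
    exact Fin.castLE_injective _ (MvPolynomial.X_injective hab)
  · set s : Equiv.Perm (Fin n) := Equiv.swap ⟨j, h⟩ (Fin.castLE h i) with hs
    have hmap : q.map (rename s : Rr n →ₐ[ℚ] Rr n).toRingHom = q := by
      ext1 d
      rw [Polynomial.coeff_map]
      refine mem_invar.1 (hq d) s fun a ha => Equiv.swap_apply_of_ne_of_ne ?_ ?_
      · rintro rfl; simp at ha
      · rintro rfl
        have := i.2
        simp at ha; omega
    have h1 := congrArg (rename s : Rr n →ₐ[ℚ] Rr n).toRingHom h0
    rw [← Polynomial.eval_map_apply, hmap, map_zero] at h1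
    simpa [hs] using h1

/-- Descending the tower: if the image of `A` in `R` consists of `S_j`-invariants and contains the
constants, the coefficients of `∏_{i < j} (T - x_i)` and the `x_i` with `i ≥ j`, then
`R` is free over `A` of rank `j!`. In the inductive step `A` is enlarged to
`A[T]/∏_{i ≤ j} (T - x_i)`, which is free of rank `j + 1` over `A` and embeds into `R` by
`T ↦ x_j`. -/
theorem exists_basis_of_lifts {n : ℕ} (j : ℕ) (hj : j ≤ n) :
    ∀ (A : Type) [CommRing A] [Algebra A (Rr n)],
      Function.Injective (algebraMap A (Rr n)) →
      (∀ a : A, algebraMap A (Rr n) a ∈ invar n j) →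
      (∃ g : Polynomial A, g.Monic ∧ g.map (algebraMap A (Rr n)) = rootPoly n j) →
      (∀ q : ℚ, (C q : Rr n) ∈ (algebraMap A (Rr n)).range) →
      (∀ i : Fin n, j ≤ (i : ℕ) → (X i : Rr n) ∈ (algebraMap A (Rr n)).range) →
      Nonempty (Module.Basis (Fin j.factorial) A (Rr n)) := by
  induction j with
  | zero =>
    intro A _ _ hinj _ _ hC hX
    have hsurj : Function.Surjective (algebraMap A (Rr n)) := by
      intro f
      change f ∈ (algebraMap A (Rr n)).range
      induction f using MvPolynomial.induction_on with
      | C q => exact hC q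
      | add p q hp hq => exact add_mem hp hq
      | mul_X p i hp => exact mul_mem hp (hX i (Nat.zero_le _))
    let e : A ≃ₗ[A] Rr n :=
      LinearEquiv.ofBijective (Algebra.linearMap A (Rr n)) ⟨hinj, hsurj⟩
    exact ⟨((Module.Basis.singleton (Fin 1) A).map e)⟩
  | succ j ih =>
    intro A _ _ hinj hinv ⟨g, hg, hgmap⟩ hC hX
    have hjn : j < n := hj
    have hnat : g.natDegree = j + 1 := by
      rw [← rootPoly_natDegree hj, ← hgmap, Polynomial.natDegree_map_eq_of_injective hinj]
    let φ : AdjoinRoot g →+* Rr n := AdjoinRoot.lift (algebraMap A (Rr n)) (X ⟨j, hjn⟩) (by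
      rw [← Polynomial.eval_map, hgmap, rootPoly_succ hjn]; simp)
    let _ : Algebra (AdjoinRoot g) (Rr n) := φ.toAlgebra
    have hof (a : A) : φ (AdjoinRoot.of g a) = algebraMap A (Rr n) a := AdjoinRoot.lift_of _
    have hroot : φ (AdjoinRoot.root g) = X ⟨j, hjn⟩ := AdjoinRoot.lift_root _
    have : IsScalarTower A (AdjoinRoot g) (Rr n) :=
      IsScalarTower.of_algebraMap_eq fun a => (hof a).symm
    obtain ⟨b⟩ : Nonempty (Module.Basis (Fin j.factorial) (AdjoinRoot g) (Rr n)) := by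
      refine ih hjn.le (AdjoinRoot g) ?_ ?_ ?_ ?_ ?_
      · rw [injective_iff_map_eq_zero]
        intro z hz
        obtain ⟨p, rfl⟩ := AdjoinRoot.mk_surjective z
        have hmod : AdjoinRoot.mk g p = AdjoinRoot.mk g (p %ₘ g) := by
          rw [AdjoinRoot.mk_eq_mk]
          exact ⟨p /ₘ g, sub_eq_of_eq_add' (Polynomial.modByMonic_add_div p g).symm⟩
        rw [hmod] at hz ⊢
        have hz' : φ (AdjoinRoot.mk g (p %ₘ g)) = 0 := hz
        rw [AdjoinRoot.lift_mk, ← Polynomial.eval_map] at hz'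
        have h0 := eq_zero_of_eval_eq_zero hjn _ (fun d => by
          rw [Polynomial.coeff_map]; exact hinv _) ?_ hz'
        · rw [(Polynomial.map_eq_zero_iff hinj).1 h0, map_zero]
        · refine (Polynomial.natDegree_map_le).trans_lt ?_
          rw [← hnat]
          refine Polynomial.natDegree_modByMonic_lt p hg ?_
          rintro rfl
          simp at hnat
      · intro z
        obtain ⟨p, rfl⟩ := AdjoinRoot.mk_surjective z
        change φ _ ∈ _
        rw [AdjoinRoot.lift_mk, Polynomial.eval₂_eq_sum]
        refine Subalgebra.sum_mem _ fun d _ => mul_mem ?_ (pow_mem ?_ _)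
        · exact invar_anti (Nat.le_succ j) (hinv _)
        · rw [mem_invar]
          intro s hs
          rw [rename_X, hs _ le_rfl]
      · have hr : (g.map (AdjoinRoot.of g)).IsRoot (AdjoinRoot.root g) := AdjoinRoot.isRoot_root g
        obtain ⟨g', hg'⟩ := Polynomial.dvd_iff_isRoot.2 hr
        refine ⟨g', (Polynomial.monic_X_sub_C _).of_mul_monic_left (hg' ▸ hg.map _), ?_⟩
        have h1 := congrArg (Polynomial.map φ) hg'
        rw [Polynomial.map_map, show φ.comp (AdjoinRoot.of g) = algebraMap A (Rr n) from
          RingHom.ext hof, hgmap, rootPoly_succ hjn, Polynomial.map_mul, Polynomial.map_sub,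
          Polynomial.map_X, Polynomial.map_C, hroot] at h1
        exact (mul_left_cancel₀ (Polynomial.X_sub_C_ne_zero _) h1).symm
      · intro q
        obtain ⟨a, ha⟩ := hC q
        exact ⟨AdjoinRoot.of g a, (hof a).trans ha⟩
      · intro i hi
        rcases hi.eq_or_lt with h | h
        · exact ⟨AdjoinRoot.root g, hroot.trans (congrArg X (Fin.ext h))⟩
        · obtain ⟨a, ha⟩ := hX i h
          exact ⟨AdjoinRoot.of g a, (hof a).trans ha⟩
    refine ⟨((AdjoinRoot.powerBasis' hg).basis.smulTower b).reindex
      (Fintype.equivFinOfCardEq ?_)⟩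
    simp [AdjoinRoot.powerBasis'_dim, hnat, Nat.factorial_succ]

/-- `R` is free of rank `k!` over `R^{S_k}`. -/
theorem exists_basis_invar {n k : ℕ} (hkn : k ≤ n) :
    Nonempty (Module.Basis (Fin k.factorial) (invar n k) (Rr n)) := by
  refine exists_basis_of_lifts k hkn (invar n k) Subtype.val_injective (fun a => a.2) ?_ ?_ ?_
  · have hl : rootPoly n k ∈ Polynomial.lifts (algebraMap (invar n k) (Rr n)) := by
      rw [Polynomial.lifts_iff_coeff_lifts]
      exact fun d => ⟨⟨_, rootPoly_coeff_mem n k d⟩, rfl⟩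
    obtain ⟨g, hg, -, hm⟩ := Polynomial.lifts_and_degree_eq_and_monic hl (rootPoly_monic n k)
    exact ⟨g, hm, hg⟩
  · exact fun q => ⟨⟨C q, Subalgebra.algebraMap_mem _ q⟩, rfl⟩
  · intro i hi
    refine ⟨⟨X i, mem_invar.2 fun s hs => ?_⟩, rfl⟩
    rw [rename_X, hs i hi]

/-! ### Decomposing a bimodule into copies of `R ⊗_{R^{S_n}} R` -/

section Decomposition

/-- An additive map between modules over `P = ℚ[x, y]` that commutes with every variable is
`P`-linear, since additivity already gives `ℚ`-linearity. -/
theorem map_smul_of_map_X_smul {σ M N : Type*} [CommRing M] [CommRing N]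
    [Module (MvPolynomial σ ℚ) M] [Module (MvPolynomial σ ℚ) N] (f : M →+ N)
    (hf : ∀ i m, f ((X i : MvPolynomial σ ℚ) • m) = (X i : MvPolynomial σ ℚ) • f m)
    (p : MvPolynomial σ ℚ) (m : M) : f (p • m) = p • f m := by
  induction p using MvPolynomial.induction_on generalizing m with
  | C q =>
    let _ : Module ℚ M := Module.compHom M (C : ℚ →+* MvPolynomial σ ℚ)
    let _ : Module ℚ N := Module.compHom N (C : ℚ →+* MvPolynomial σ ℚ)
    exact map_rat_smul f q m
  | add p q hp hq => rw [add_smul, add_smul, map_add, hp, hq]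
  | mul_X p i hp => rw [mul_smul, mul_smul, hp, hf]

/-- Shortcut instance: the general search for this action is slow. -/
local instance instDistribSMulB (n : ℕ) : DistribSMul (PP n) ((Rr n) ⊗[invar n n] (Rr n)) :=
  (inferInstance : (Module (PP n) ((Rr n) ⊗[invar n n] (Rr n)))).toDistribMulAction.toDistribSMul

/-- Shortcut instance: the general search for this action is slow. -/
local instance instSMulB (n : ℕ) : SMul (PP n) ((Rr n) ⊗[invar n n] (Rr n)) :=
  (inferInstance : (Module (PP n) ((Rr n) ⊗[invar n n] (Rr n)))).toSMul

theorem X_inl_smul_tmul {n : ℕ} (i : Fin n) (r s : Rr n) :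
    (X (Sum.inl i) : PP n) • (r ⊗ₜ[invar n n] s) = (X i * r) ⊗ₜ[invar n n] s := by
  change PhiN n (X (Sum.inl i)) * _ = _
  rw [PhiN, aeval_X, Sum.elim_inl, Algebra.TensorProduct.tmul_mul_tmul, one_mul]

theorem X_inr_smul_tmul {n : ℕ} (i : Fin n) (r s : Rr n) :
    (X (Sum.inr i) : PP n) • (r ⊗ₜ[invar n n] s) = r ⊗ₜ[invar n n] (X i * s) := by
  change PhiN n (X (Sum.inr i)) * _ = _
  rw [PhiN, aeval_X, Sum.elim_inr, Algebra.TensorProduct.tmul_mul_tmul, one_mul]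

/-- Criterion for a module `T` to be a direct sum of copies of `S`: the maps `θ i` are the
inclusions of the summands and the maps `π i` the projections onto them. -/
theorem nonempty_equiv_pi {P S T : Type*} [CommRing P] [CommRing S] [CommRing T] [Module P S]
    [Module P T] {m : ℕ} (θ : Fin m → S →+ T) (π : Fin m → T →+ S)
    (hθ : ∀ i (p : P) s, θ i (p • s) = p • θ i s)
    (hπ : ∀ i j s, π i (θ j s) = if i = j then s else 0)
    (hsurj : ∀ t, t ∈ ⨆ i, (θ i).range) :
    Nonempty (T ≃ₗ[P] (Fin m → S)) := by
  let φ : (Fin m → S) →ₗ[P] T :=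
    { toFun := fun t => ∑ i, θ i (t i)
      map_add' := fun a b => by simp [Finset.sum_add_distrib]
      map_smul' := fun p a => by simp [hθ, Finset.smul_sum] }
  have hφ (t) : φ t = ∑ i, θ i (t i) := rfl
  refine ⟨(LinearEquiv.ofBijective φ ⟨fun a b hab => ?_, fun t => ?_⟩).symm⟩
  · funext i
    have := congrArg (π i) hab
    simpa [hφ, hπ] using this
  · change t ∈ LinearMap.range φ
    have hle : (⨆ i, (θ i).range) ≤ (LinearMap.range φ).toAddSubgroup := by
      refine iSup_le fun i => ?_
      rintro _ ⟨s, rfl⟩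
      refine ⟨Pi.single i s, ?_⟩
      rw [hφ, Finset.sum_eq_single i]
      · simp
      · intro j _ hj; simp [hj]
      · simp
    exact hle (hsurj t)

/-- A biadditive map out of `M × N`, in the form used by `TensorProduct.liftAddHom`. -/
def biadd {M N T : Type*} [AddCommGroup M] [AddCommGroup N] [AddCommGroup T] (f : M → N → T)
    (h₁ : ∀ a b c, f (a + b) c = f a c + f b c) (h₂ : ∀ a b c, f a (b + c) = f a b + f a c) :
    M →+ N →+ T :=
  AddMonoidHom.mk' (fun a => AddMonoidHom.mk' (f a) (h₂ a)) fun a b => by ext c; exact h₁ a b c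

/-! ### The product with `R ⊗_{R^{S_k}} R` on the left -/

/-- The pure tensor `m ⊗ t` in `(R ⊗_{R^{S_k}} R) ⊗_R (R ⊗_{R^{S_n}} R)`. -/
def mnTmul {n k : ℕ} (m : MkT n k) (t : (Rr n) ⊗[invar n n] (Rr n)) : MN n k := m ⊗ₜ[Rr n] t

/-- The pure tensor `r ⊗ s` in `R ⊗_{R^{S_k}} R`. -/
def mkTmul {n k : ℕ} (r s : Rr n) : MkT n k := toMkT n k (r ⊗ₜ[invar n k] s)

theorem mnTmul_mul {n k : ℕ} (m m' : MkT n k) (t t' : (Rr n) ⊗[invar n n] (Rr n)) :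
    mnTmul m t * mnTmul m' t' = mnTmul (m * m') (t * t') :=
  Algebra.TensorProduct.tmul_mul_tmul _ _ _ _

theorem mkTmul_mul {n k : ℕ} (r s r' s' : Rr n) :
    (mkTmul r s * mkTmul r' s' : MkT n k) = mkTmul (r * r') (s * s') :=
  Algebra.TensorProduct.tmul_mul_tmul _ _ _ _

theorem mkT_smul_eq {n k : ℕ} (a : Rr n) (m : MkT n k) : a • m = mkTmul 1 a * m := rfl

theorem mnTmul_smul {n k : ℕ} (a r s u v : Rr n) :
    (mnTmul (mkTmul r (a * s)) (u ⊗ₜ v) : MN n k) = mnTmul (mkTmul r s) ((a * u) ⊗ₜ v) := by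
  have := TensorProduct.smul_tmul (R := Rr n) a (mkTmul r s : MkT n k) (u ⊗ₜ[invar n n] v)
  rw [mkT_smul_eq, mkTmul_mul, one_mul] at this
  exact this

theorem X_inl_smul_mn {n k : ℕ} (i : Fin n) (r s u v : Rr n) :
    (X (Sum.inl i) : PP n) • (mnTmul (mkTmul r s) (u ⊗ₜ v) : MN n k) =
      mnTmul (mkTmul (X i * r) s) (u ⊗ₜ v) := by
  change PsiMN n k (X (Sum.inl i)) * _ = _
  rw [show PsiMN n k (X (Sum.inl i)) = mnTmul (mkTmul (X i) 1) (1 ⊗ₜ 1) from aeval_X _ _]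
  rw [mnTmul_mul, mkTmul_mul, Algebra.TensorProduct.tmul_mul_tmul, one_mul, one_mul, one_mul]

theorem X_inr_smul_mn {n k : ℕ} (i : Fin n) (r s u v : Rr n) :
    (X (Sum.inr i) : PP n) • (mnTmul (mkTmul r s) (u ⊗ₜ v) : MN n k) =
      mnTmul (mkTmul r s) (u ⊗ₜ (X i * v)) := by
  change PsiMN n k (X (Sum.inr i)) * _ = _
  rw [show PsiMN n k (X (Sum.inr i)) = mnTmul (mkTmul 1 1) (1 ⊗ₜ X i) from aeval_X _ _]
  rw [mnTmul_mul, mkTmul_mul, Algebra.TensorProduct.tmul_mul_tmul, one_mul, one_mul, one_mul]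

theorem mkTmul_smul {n k : ℕ} {a : Rr n} (ha : a ∈ invar n k) (r s : Rr n) :
    (mkTmul (a * r) s : MkT n k) = mkTmul r (a * s) :=
  TensorProduct.smul_tmul (R := invar n k) (⟨a, ha⟩ : invar n k) r s

theorem tmul_smul_invar {n k : ℕ} {a : Rr n} (ha : a ∈ invar n k) (r s : Rr n) :
    ((a * r) ⊗ₜ s : (Rr n) ⊗[invar n k] (Rr n)) = r ⊗ₜ (a * s) :=
  TensorProduct.smul_tmul (R := invar n k) (⟨a, ha⟩ : invar n k) r s

/-- The map `R ⊗_{R^{S_n}} R → (R ⊗_{R^{S_k}} R) ⊗_R (R ⊗_{R^{S_n}} R)`,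
`r ⊗ s ↦ (r ⊗ w) ⊗ (1 ⊗ s)`, for a fixed `w ∈ R`. -/
def mnIncl {n k : ℕ} (hkn : k ≤ n) (w : Rr n) : (Rr n) ⊗[invar n n] (Rr n) →+ MN n k :=
  TensorProduct.liftAddHom
    (biadd (fun r s => mnTmul (mkTmul r w) (1 ⊗ₜ s))
      (fun a b c => by
        have : (mkTmul (a + b) w : MkT n k) = mkTmul a w + mkTmul b w :=
          TensorProduct.add_tmul _ _ _
        rw [this]; exact TensorProduct.add_tmul _ _ _)
      (fun a b c => by
        rw [TensorProduct.tmul_add]; exact TensorProduct.tmul_add _ _ _))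
    (fun a r s => by
      change mnTmul (mkTmul ((a : Rr n) * r) w) (1 ⊗ₜ s) =
        mnTmul (mkTmul r w) (1 ⊗ₜ ((a : Rr n) * s))
      rw [mkTmul_smul (invar_anti hkn a.2), mnTmul_smul, tmul_smul_invar a.2])

theorem mnIncl_tmul {n k : ℕ} (hkn : k ≤ n) (w r s : Rr n) :
    (mnIncl hkn w (r ⊗ₜ s) : MN n k) = mnTmul (mkTmul r w) (1 ⊗ₜ s) := rfl

/-- The basis coordinate `R → R^{S_k} ⊆ R`, extended to a left `R`-linear map
`R ⊗_{R^{S_k}} R → R`, recorded here as an additive map. -/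
def coordL {n k m : ℕ} (b : Module.Basis (Fin m) (invar n k) (Rr n)) (i : Fin m) :
    MkT n k →+ Rr n :=
  ((Algebra.TensorProduct.basis (Rr n) b).coord i).toAddMonoidHom

theorem coordL_tmul {n k m : ℕ} (b : Module.Basis (Fin m) (invar n k) (Rr n)) (i : Fin m)
    (r s : Rr n) : coordL b i (mkTmul r s) = r * (b.repr s i : Rr n) := by
  change (Algebra.TensorProduct.basis (Rr n) b).repr (r ⊗ₜ s) i = _
  rw [Algebra.TensorProduct.basis_repr_tmul]
  rfl

theorem coordL_mul {n k m : ℕ} (b : Module.Basis (Fin m) (invar n k) (Rr n)) (i : Fin m)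
    (a : Rr n) (x : MkT n k) : coordL b i (mkTmul a 1 * x) = a * coordL b i x := by
  have h : (mkTmul a 1 * x : MkT n k) = (a • (show (Rr n) ⊗[invar n k] (Rr n) from x) :) :=
    (Algebra.smul_def a (show (Rr n) ⊗[invar n k] (Rr n) from x)).symm
  rw [h]
  exact map_smul ((Algebra.TensorProduct.basis (Rr n) b).coord i) a _

/-- The map `r ↦ coordL b i (x * (1 ⊗ r))`, which is linear over `R^{S_n}`. -/
def mnCoord {n k m : ℕ} (hkn : k ≤ n) (b : Module.Basis (Fin m) (invar n k) (Rr n)) (i : Fin m)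
    (x : MkT n k) : Rr n →ₗ[invar n n] Rr n where
  toFun r := coordL b i (x * mkTmul 1 r)
  map_add' r s := by
    have : (mkTmul 1 (r + s) : MkT n k) = mkTmul 1 r + mkTmul 1 s := TensorProduct.tmul_add _ _ _
    rw [this, mul_add, map_add]
  map_smul' a r := by
    have : x * mkTmul 1 (a • r) = mkTmul (a : Rr n) 1 * (x * mkTmul 1 r) := by
      rw [mul_left_comm, mkTmul_mul, mul_one, one_mul]
      conv_rhs => rw [← mul_one (a : Rr n), mkTmul_smul (invar_anti hkn a.2)]
      rfl
    rw [this, coordL_mul]; rfl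

/-- The projection `(a ⊗ s) ⊗ (r ⊗ t) ↦ (a * coord_i (s * r)) ⊗ t` onto the `i`-th summand. -/
def mnProj {n k m : ℕ} (hkn : k ≤ n) (b : Module.Basis (Fin m) (invar n k) (Rr n)) (i : Fin m) :
    MN n k →+ (Rr n) ⊗[invar n n] (Rr n) :=
  TensorProduct.liftAddHom (R := Rr n) (M := MkT n k)
    (biadd (fun x t => LinearMap.rTensor (Rr n) (mnCoord hkn b i x) t)
      (fun x y t => by
        have : mnCoord hkn b i (x + y) = mnCoord hkn b i x + mnCoord hkn b i y := by
          ext1 r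
          change coordL b i ((x + y) * mkTmul 1 r) = _
          rw [add_mul, map_add]; rfl
        rw [this, LinearMap.rTensor_add, LinearMap.add_apply])
      (fun x t u => map_add _ _ _))
    (fun a x t => by
      change LinearMap.rTensor (Rr n) (mnCoord hkn b i (a • x)) t =
        LinearMap.rTensor (Rr n) (mnCoord hkn b i x) (a • t)
      induction t with
      | zero => simp
      | tmul r s =>
        rw [TensorProduct.smul_tmul', LinearMap.rTensor_tmul, LinearMap.rTensor_tmul]
        congr 1
        change coordL b i ((a • x) * mkTmul 1 r) = coordL b i (x * mkTmul 1 (a * r))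
        rw [mkT_smul_eq, mul_comm (mkTmul 1 a) x, mul_assoc, mkTmul_mul, one_mul]
      | add t u ht hu => rw [map_add, smul_add, map_add, ht, hu])

theorem mnProj_tmul {n k m : ℕ} (hkn : k ≤ n) (b : Module.Basis (Fin m) (invar n k) (Rr n))
    (i : Fin m) (a s r t : Rr n) : mnProj hkn b i (mnTmul (mkTmul a s) (r ⊗ₜ t)) =
      (a * (b.repr (s * r) i : Rr n)) ⊗ₜ t := by
  change (coordL b i (mkTmul a s * mkTmul 1 r)) ⊗ₜ t = _
  rw [mkTmul_mul, mul_one]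
  congr 1
  exact coordL_tmul b i _ _

theorem mn_mem_iSup {n k m : ℕ} (hkn : k ≤ n) (b : Module.Basis (Fin m) (invar n k) (Rr n))
    (t : MN n k) : t ∈ ⨆ i, (mnIncl hkn (b i) : _ →+ MN n k).range := by
  have h0 (a s r t : Rr n) : (mnTmul (mkTmul a s) (r ⊗ₜ t) : MN n k) ∈
      ⨆ i, (mnIncl hkn (b i) : _ →+ MN n k).range := by
    have h1 : (mnTmul (mkTmul a s) (r ⊗ₜ t) : MN n k) =
        ∑ i, mnIncl hkn (b i) ((((b.repr (r * s) i : Rr n)) * a) ⊗ₜ t) := by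
      conv_lhs => rw [← mul_one r, ← mnTmul_smul, ← b.sum_repr (r * s)]
      have h2 : (mkTmul a (∑ i, b.repr (r * s) i • b i) : MkT n k) =
          ∑ i, mkTmul a (b.repr (r * s) i • b i) := TensorProduct.tmul_sum _ _ _
      have h3 (f : Fin m → MkT n k) : (mnTmul (∑ i, f i) (1 ⊗ₜ t) : MN n k) =
          ∑ i, mnTmul (f i) (1 ⊗ₜ t) := TensorProduct.sum_tmul _ _ _
      rw [h2, h3]
      refine Finset.sum_congr rfl fun i _ => ?_
      rw [mnIncl_tmul, mkTmul_smul (b.repr (r * s) i).2]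
      rfl
    rw [h1]
    exact sum_mem fun i _ => AddSubgroup.mem_iSup_of_mem i ⟨_, rfl⟩
  refine TensorProduct.induction_on (R := Rr n) (M := MkT n k)
    (motive := fun t => (show MN n k from t) ∈ ⨆ i, (mnIncl hkn (b i) : _ →+ MN n k).range)
    t (zero_mem _) (fun x y => ?_) (fun x y hx hy => add_mem hx hy)
  change mnTmul x y ∈ _
  induction y with
  | zero => rw [show mnTmul x 0 = (0 : MN n k) from TensorProduct.tmul_zero _ _]; exact zero_mem _
  | add y z hy hz => convert add_mem hy hz; exact TensorProduct.tmul_add _ _ _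
  | tmul r t =>
    refine TensorProduct.induction_on (motive := fun x : (Rr n) ⊗[invar n k] (Rr n) =>
      (mnTmul (toMkT n k x) (r ⊗ₜ t) : MN n k) ∈ ⨆ i, (mnIncl hkn (b i) : _ →+ MN n k).range)
      x ?_ (fun a s => h0 a s r t) (fun x y hx hy => ?_)
    · have h : (mnTmul (toMkT n k 0) (r ⊗ₜ t) : MN n k) = 0 := TensorProduct.zero_tmul _ _
      rw [h]; exact zero_mem _
    · convert add_mem hx hy; exact TensorProduct.add_tmul _ _ _

theorem mnIncl_smul {n k : ℕ} (hkn : k ≤ n) (w : Rr n) (p : PP n)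
    (t : (Rr n) ⊗[invar n n] (Rr n)) : (mnIncl hkn w (p • t) : MN n k) = p • mnIncl hkn w t := by
  refine map_smul_of_map_X_smul (mnIncl hkn w) (fun x t => ?_) p t
  induction t with
  | zero => rw [smul_zero, map_zero, smul_zero]
  | tmul r s =>
    rcases x with j | j
    · rw [X_inl_smul_tmul, mnIncl_tmul, mnIncl_tmul, X_inl_smul_mn]
    · rw [X_inr_smul_tmul, mnIncl_tmul, mnIncl_tmul, X_inr_smul_mn]
  | add a b ha hb => rw [smul_add, map_add, map_add, smul_add, ha, hb]

theorem mnProj_mnIncl {n k m : ℕ} (hkn : k ≤ n) (b : Module.Basis (Fin m) (invar n k) (Rr n))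
    (i j : Fin m) (t : (Rr n) ⊗[invar n n] (Rr n)) :
    mnProj hkn b i (mnIncl hkn (b j) t) = if i = j then t else 0 := by
  induction t with
  | zero => rw [map_zero, map_zero, ite_self]
  | tmul r s =>
    rw [mnIncl_tmul, mnProj_tmul, mul_one, b.repr_self, Finsupp.single_apply]
    by_cases h : i = j
    · simp [h]
    · simp [h, Ne.symm h]
  | add x y hx hy => rw [map_add, map_add, hx, hy]; split_ifs <;> simp

theorem nonempty_mn_equiv {n k m : ℕ} (hkn : k ≤ n)
    (b : Module.Basis (Fin m) (invar n k) (Rr n)) :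
    Nonempty ((MN n k) ≃ₗ[PP n] (Fin m → ((Rr n) ⊗[invar n n] (Rr n)))) :=
  nonempty_equiv_pi (fun i => mnIncl hkn (b i)) (mnProj hkn b)
    (fun i => mnIncl_smul hkn (b i)) (mnProj_mnIncl hkn b) (mn_mem_iSup hkn b)

/-! ### The product with `R ⊗_{R^{S_k}} R` on the right -/

/-- The pure tensor `t ⊗ m` in `(R ⊗_{R^{S_n}} R) ⊗_R (R ⊗_{R^{S_k}} R)`. -/
def nmTmul {n k : ℕ} (t : SnR n) (m : (Rr n) ⊗[invar n k] (Rr n)) : NM n k := t ⊗ₜ[Rr n] m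

/-- The pure tensor `r ⊗ s` in `R ⊗_{R^{S_n}} R`. -/
def snTmul {n : ℕ} (r s : Rr n) : SnR n := toSnR n (r ⊗ₜ[invar n n] s)

theorem nmTmul_mul {n k : ℕ} (t t' : SnR n) (m m' : (Rr n) ⊗[invar n k] (Rr n)) :
    nmTmul t m * nmTmul t' m' = nmTmul (t * t') (m * m') :=
  Algebra.TensorProduct.tmul_mul_tmul _ _ _ _

theorem snTmul_mul {n : ℕ} (r s r' s' : Rr n) :
    (snTmul r s * snTmul r' s' : SnR n) = snTmul (r * r') (s * s') :=
  Algebra.TensorProduct.tmul_mul_tmul _ _ _ _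

theorem snR_smul_eq {n : ℕ} (a : Rr n) (t : SnR n) : a • t = snTmul 1 a * t := rfl

theorem nmTmul_smul {n k : ℕ} (a r s u v : Rr n) :
    (nmTmul (snTmul r (a * s)) (u ⊗ₜ v) : NM n k) = nmTmul (snTmul r s) ((a * u) ⊗ₜ v) := by
  have := TensorProduct.smul_tmul (R := Rr n) a (snTmul r s : SnR n) (u ⊗ₜ[invar n k] v)
  rw [snR_smul_eq, snTmul_mul, one_mul] at this
  exact this

theorem X_inl_smul_nm {n k : ℕ} (i : Fin n) (r s u v : Rr n) :
    (X (Sum.inl i) : PP n) • (nmTmul (snTmul r s) (u ⊗ₜ v) : NM n k) =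
      nmTmul (snTmul (X i * r) s) (u ⊗ₜ v) := by
  change PsiNM n k (X (Sum.inl i)) * _ = _
  rw [show PsiNM n k (X (Sum.inl i)) = nmTmul (snTmul (X i) 1) (1 ⊗ₜ 1) from aeval_X _ _,
    nmTmul_mul, snTmul_mul, Algebra.TensorProduct.tmul_mul_tmul, one_mul, one_mul, one_mul]

theorem X_inr_smul_nm {n k : ℕ} (i : Fin n) (r s u v : Rr n) :
    (X (Sum.inr i) : PP n) • (nmTmul (snTmul r s) (u ⊗ₜ v) : NM n k) =
      nmTmul (snTmul r s) (u ⊗ₜ (X i * v)) := by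
  change PsiNM n k (X (Sum.inr i)) * _ = _
  rw [show PsiNM n k (X (Sum.inr i)) = nmTmul (snTmul 1 1) (1 ⊗ₜ X i) from aeval_X _ _,
    nmTmul_mul, snTmul_mul, Algebra.TensorProduct.tmul_mul_tmul, one_mul, one_mul, one_mul]

theorem snTmul_smul {n : ℕ} {a : Rr n} (ha : a ∈ invar n n) (r s : Rr n) :
    (snTmul (a * r) s : SnR n) = snTmul r (a * s) :=
  tmul_smul_invar ha r s

/-- The map `R ⊗_{R^{S_n}} R → (R ⊗_{R^{S_n}} R) ⊗_R (R ⊗_{R^{S_k}} R)`,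
`r ⊗ s ↦ (r ⊗ 1) ⊗ (w ⊗ s)`, for a fixed `w ∈ R`. -/
def nmIncl {n k : ℕ} (hkn : k ≤ n) (w : Rr n) : (Rr n) ⊗[invar n n] (Rr n) →+ NM n k :=
  TensorProduct.liftAddHom
    (biadd (fun r s => nmTmul (snTmul r 1) (w ⊗ₜ s))
      (fun a b c => by
        have : (snTmul (a + b) 1 : SnR n) = snTmul a 1 + snTmul b 1 :=
          TensorProduct.add_tmul _ _ _
        rw [this]; exact TensorProduct.add_tmul _ _ _)
      (fun a b c => by
        rw [TensorProduct.tmul_add]; exact TensorProduct.tmul_add _ _ _))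
    (fun a r s => by
      change nmTmul (snTmul ((a : Rr n) * r) 1) (w ⊗ₜ s) =
        nmTmul (snTmul r 1) (w ⊗ₜ ((a : Rr n) * s))
      rw [snTmul_smul a.2, nmTmul_smul, tmul_smul_invar (invar_anti hkn a.2)])

theorem nmIncl_tmul {n k : ℕ} (hkn : k ≤ n) (w r s : Rr n) :
    (nmIncl hkn w (r ⊗ₜ s) : NM n k) = nmTmul (snTmul r 1) (w ⊗ₜ s) := rfl

/-- The basis coordinate `R → R^{S_k} ⊆ R`, extended to a right `R`-linear map
`R ⊗_{R^{S_k}} R → R`, recorded here as an `R^{S_k}`-linear map. -/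
def coordR {n k m : ℕ} (b : Module.Basis (Fin m) (invar n k) (Rr n)) (i : Fin m) :
    (Rr n) ⊗[invar n k] (Rr n) →ₗ[invar n k] Rr n :=
  ((Algebra.TensorProduct.basis (Rr n) b).coord i).restrictScalars (invar n k) ∘ₗ
    (TensorProduct.comm (invar n k) (Rr n) (Rr n)).toLinearMap

theorem coordR_tmul {n k m : ℕ} (b : Module.Basis (Fin m) (invar n k) (Rr n)) (i : Fin m)
    (r s : Rr n) : coordR b i (r ⊗ₜ s) = s * (b.repr r i : Rr n) :=
  coordL_tmul b i s r

/-- The map `r ↦ coordR b i ((r ⊗ 1) * x)`, which is linear over `R^{S_n}`. -/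
def nmCoord {n k m : ℕ} (hkn : k ≤ n) (b : Module.Basis (Fin m) (invar n k) (Rr n)) (i : Fin m)
    (x : (Rr n) ⊗[invar n k] (Rr n)) : Rr n →ₗ[invar n n] Rr n where
  toFun r := coordR b i ((r ⊗ₜ 1) * x)
  map_add' r s := by rw [TensorProduct.add_tmul, add_mul, map_add]
  map_smul' a r := by
    have : ((a • r) ⊗ₜ 1 * x : (Rr n) ⊗[invar n k] (Rr n)) =
        (⟨a, invar_anti hkn a.2⟩ : invar n k) • (r ⊗ₜ 1 * x) := by
      rw [← smul_mul_assoc]; rfl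
    rw [this, map_smul]; rfl

/-- The projection `(r ⊗ s) ⊗ (a ⊗ t) ↦ r ⊗ (t * coord_i (s * a))` onto the `i`-th summand. -/
def nmProj {n k m : ℕ} (hkn : k ≤ n) (b : Module.Basis (Fin m) (invar n k) (Rr n)) (i : Fin m) :
    NM n k →+ (Rr n) ⊗[invar n n] (Rr n) :=
  TensorProduct.liftAddHom (R := Rr n) (M := SnR n)
    (biadd (fun t x => LinearMap.lTensor (Rr n) (nmCoord hkn b i x)
        (show (Rr n) ⊗[invar n n] (Rr n) from t))
      (fun t u x => map_add _ _ _)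
      (fun t x y => by
        have : nmCoord hkn b i (x + y) = nmCoord hkn b i x + nmCoord hkn b i y := by
          ext1 r
          change coordR b i ((r ⊗ₜ 1) * (x + y)) = _
          rw [mul_add, map_add]; rfl
        rw [this, LinearMap.lTensor_add, LinearMap.add_apply]))
    (fun a t x => by
      change LinearMap.lTensor (Rr n) (nmCoord hkn b i x) (snTmul 1 a * t) =
        LinearMap.lTensor (Rr n) (nmCoord hkn b i (a • x))
          (show (Rr n) ⊗[invar n n] (Rr n) from t)
      refine TensorProduct.induction_on (motive := fun t : (Rr n) ⊗[invar n n] (Rr n) =>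
        LinearMap.lTensor (Rr n) (nmCoord hkn b i x) ((1 ⊗ₜ a) * t) =
          LinearMap.lTensor (Rr n) (nmCoord hkn b i (a • x)) t)
        t ?_ (fun r s => ?_) (fun t u ht hu => ?_)
      · rw [mul_zero, map_zero, map_zero]
      · rw [Algebra.TensorProduct.tmul_mul_tmul, LinearMap.lTensor_tmul, LinearMap.lTensor_tmul,
          one_mul]
        congr 1
        change coordR b i (((a * s) ⊗ₜ 1) * x) = coordR b i ((s ⊗ₜ 1) * (a • x))
        rw [mul_smul_comm, ← smul_mul_assoc, TensorProduct.smul_tmul', smul_eq_mul]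
      · rw [mul_add, map_add, map_add, ht, hu])

theorem nmProj_tmul {n k m : ℕ} (hkn : k ≤ n) (b : Module.Basis (Fin m) (invar n k) (Rr n))
    (i : Fin m) (r s a t : Rr n) : nmProj hkn b i (nmTmul (snTmul r s) (a ⊗ₜ t)) =
      r ⊗ₜ (t * (b.repr (s * a) i : Rr n)) := by
  change r ⊗ₜ (coordR b i ((s ⊗ₜ 1) * (a ⊗ₜ t))) = _
  rw [Algebra.TensorProduct.tmul_mul_tmul, one_mul, coordR_tmul]

theorem nm_mem_iSup {n k m : ℕ} (hkn : k ≤ n) (b : Module.Basis (Fin m) (invar n k) (Rr n))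
    (t : NM n k) : t ∈ ⨆ i, (nmIncl hkn (b i) : _ →+ NM n k).range := by
  have h0 (r s a t : Rr n) : (nmTmul (snTmul r s) (a ⊗ₜ t) : NM n k) ∈
      ⨆ i, (nmIncl hkn (b i) : _ →+ NM n k).range := by
    have h1 : (nmTmul (snTmul r s) (a ⊗ₜ t) : NM n k) =
        ∑ i, nmIncl hkn (b i) (r ⊗ₜ ((b.repr (s * a) i : Rr n) * t)) := by
      conv_lhs => rw [← mul_one s, nmTmul_smul, ← b.sum_repr (s * a), TensorProduct.sum_tmul]
      have h3 (f : Fin m → (Rr n) ⊗[invar n k] (Rr n)) :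
          (nmTmul (snTmul r 1) (∑ i, f i) : NM n k) = ∑ i, nmTmul (snTmul r 1) (f i) :=
        TensorProduct.tmul_sum _ _ _
      rw [h3]
      refine Finset.sum_congr rfl fun i _ => ?_
      rw [nmIncl_tmul, ← tmul_smul_invar (b.repr (s * a) i).2]
      rfl
    rw [h1]
    exact sum_mem fun i _ => AddSubgroup.mem_iSup_of_mem i ⟨_, rfl⟩
  refine TensorProduct.induction_on (R := Rr n) (M := SnR n)
    (motive := fun t => (show NM n k from t) ∈ ⨆ i, (nmIncl hkn (b i) : _ →+ NM n k).range)
    t (zero_mem _) (fun x y => ?_) (fun x y hx hy => add_mem hx hy)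
  change nmTmul x y ∈ _
  induction y with
  | zero => rw [show nmTmul x 0 = (0 : NM n k) from TensorProduct.tmul_zero _ _]; exact zero_mem _
  | add y z hy hz => convert add_mem hy hz; exact TensorProduct.tmul_add _ _ _
  | tmul a t =>
    refine TensorProduct.induction_on (motive := fun x : (Rr n) ⊗[invar n n] (Rr n) =>
      (nmTmul (toSnR n x) (a ⊗ₜ t) : NM n k) ∈ ⨆ i, (nmIncl hkn (b i) : _ →+ NM n k).range)
      x ?_ (fun r s => h0 r s a t) (fun x y hx hy => ?_)
    · have h : (nmTmul (toSnR n 0) (a ⊗ₜ t) : NM n k) = 0 := TensorProduct.zero_tmul _ _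
      rw [h]; exact zero_mem _
    · convert add_mem hx hy; exact TensorProduct.add_tmul _ _ _

theorem nmIncl_smul {n k : ℕ} (hkn : k ≤ n) (w : Rr n) (p : PP n)
    (t : (Rr n) ⊗[invar n n] (Rr n)) : (nmIncl hkn w (p • t) : NM n k) = p • nmIncl hkn w t := by
  refine map_smul_of_map_X_smul (nmIncl hkn w) (fun x t => ?_) p t
  induction t with
  | zero => rw [smul_zero, map_zero, smul_zero]
  | tmul r s =>
    rcases x with j | j
    · rw [X_inl_smul_tmul, nmIncl_tmul, nmIncl_tmul, X_inl_smul_nm]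
    · rw [X_inr_smul_tmul, nmIncl_tmul, nmIncl_tmul, X_inr_smul_nm]
  | add a b ha hb => rw [smul_add, map_add, map_add, smul_add, ha, hb]

theorem nmProj_nmIncl {n k m : ℕ} (hkn : k ≤ n) (b : Module.Basis (Fin m) (invar n k) (Rr n))
    (i j : Fin m) (t : (Rr n) ⊗[invar n n] (Rr n)) :
    nmProj hkn b i (nmIncl hkn (b j) t) = if i = j then t else 0 := by
  induction t with
  | zero => rw [map_zero, map_zero, ite_self]
  | tmul r s =>
    rw [nmIncl_tmul, nmProj_tmul, one_mul, b.repr_self, Finsupp.single_apply]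
    by_cases h : i = j
    · simp [h]
    · simp [h, Ne.symm h]
  | add x y hx hy => rw [map_add, map_add, hx, hy]; split_ifs <;> simp

theorem nonempty_nm_equiv {n k m : ℕ} (hkn : k ≤ n)
    (b : Module.Basis (Fin m) (invar n k) (Rr n)) :
    Nonempty ((NM n k) ≃ₗ[PP n] (Fin m → ((Rr n) ⊗[invar n n] (Rr n)))) :=
  nonempty_equiv_pi (fun i => nmIncl hkn (b i)) (nmProj hkn b)
    (fun i => nmIncl_smul hkn (b i)) (nmProj_nmIncl hkn b) (nm_mem_iSup hkn b)

end Decomposition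

/-- ungraded absorption, Proposition `prop-BwOnB0`: for `1 ≤ k ≤ n`,
`(R ⊗_{R^{S_k}} R) ⊗_R (R ⊗_{R^{S_n}} R) ≅ (R ⊗_{R^{S_n}} R)^{⊕ k!}` and
`(R ⊗_{R^{S_n}} R) ⊗_R (R ⊗_{R^{S_k}} R) ≅ (R ⊗_{R^{S_n}} R)^{⊕ k!}` as `P`-modules
(equivalently, as `(R,R)`-bimodules). -/
theorem absorption_by_Bw0 (n : ℕ) (hn : 1 ≤ n) (k : ℕ) (hk : 1 ≤ k) (hkn : k ≤ n) :
    Nonempty ((MN n k) ≃ₗ[PP n]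
      (Fin (Nat.factorial k) → ((Rr n) ⊗[invar n n] (Rr n)))) ∧
    Nonempty ((NM n k) ≃ₗ[PP n]
      (Fin (Nat.factorial k) → ((Rr n) ⊗[invar n n] (Rr n)))) := by
  obtain ⟨b⟩ := exists_basis_invar hkn
  exact ⟨nonempty_mn_equiv hkn b, nonempty_nm_equiv hkn b⟩

end
end
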